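/- arXiv:1709.08377 — 7 statements merged into one kernel-verified Lean document; each statement's English description precedes it below -/
import Mathlib

section
/- Let Q be an N×N Hermitian positive semidefinite complex matrix and let N₀ > 0, N₁ ≥ 0, N₂ ≥ 0 be real numbers. Then tr((Q + (N₀ + N₁ + N₂)·I)⁻¹) ≥ (N₀/(N₀ + N₁ + N₂)) · tr((Q + N₀·I)⁻¹). -/
open Matrix
open scoped ComplexOrder

/-- The trace of the resolvent of a positive semidefinite matrix at a negative real point,
expressed through the eigenvalues. -/
theorem Matrix.PosSemidef.trace_inv_add_smul_one {n : Type*} [Fintype n] [DecidableEq n]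
    {Q : Matrix n n ℂ} (hQ : Q.PosSemidef) {c : ℝ} (hc : 0 < c) :
    ((Q + (c : ℂ) • (1 : Matrix n n ℂ))⁻¹).trace =
      ((∑ i, (hQ.isHermitian.eigenvalues i + c)⁻¹ : ℝ) : ℂ) := by
  set eig := hQ.isHermitian.eigenvalues
  set φ := Unitary.conjStarAlgAut ℂ (Matrix n n ℂ) hQ.isHermitian.eigenvectorUnitary with hφ
  have hQφ : Q + (c : ℂ) • (1 : Matrix n n ℂ) =
      φ (diagonal fun i => ((eig i + c : ℝ) : ℂ)) := by
    have hsum : (diagonal fun i => ((eig i + c : ℝ) : ℂ)) =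
        diagonal (RCLike.ofReal ∘ eig) + (c : ℂ) • (1 : Matrix n n ℂ) := by
      rw [smul_one_eq_diagonal, diagonal_add]
      simp
    rw [hsum, map_add, map_smul, map_one, ← hQ.isHermitian.spectral_theorem]
  have hinv : (Q + (c : ℂ) • (1 : Matrix n n ℂ))⁻¹ =
      φ (diagonal fun i => (((eig i + c)⁻¹ : ℝ) : ℂ)) := by
    refine inv_eq_right_inv ?_
    rw [hQφ, ← map_mul, diagonal_mul_diagonal, ← map_one φ, ← diagonal_one]
    congr 2
    funext i
    have hpos : 0 < eig i + c := add_pos_of_nonneg_of_pos (hQ.eigenvalues_nonneg i) hc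
    rw [← Complex.ofReal_mul, mul_inv_cancel₀ hpos.ne', Complex.ofReal_one]
  rw [hinv, hφ, Unitary.conjStarAlgAut_apply, trace_mul_cycle, Unitary.coe_star_mul_self, one_mul,
    trace_diagonal, Complex.ofReal_sum]

/-- For `Q` Hermitian positive semidefinite, `N₀ > 0`, `N₁, N₂ ≥ 0`,
`tr((Q + (N₀+N₁+N₂)·I)⁻¹) ≥ (N₀/(N₀+N₁+N₂)) · tr((Q + N₀·I)⁻¹)`
(the traces being real numbers). -/
theorem stmt3 (N : ℕ) (Q : Matrix (Fin N) (Fin N) ℂ) (hQ : Q.PosSemidef)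
    (N₀ N₁ N₂ : ℝ) (h0 : 0 < N₀) (h1 : 0 ≤ N₁) (h2 : 0 ≤ N₂) :
    ((Q + (((N₀ + N₁ + N₂ : ℝ)) : ℂ) • (1 : Matrix (Fin N) (Fin N) ℂ))⁻¹).trace.re
      ≥ (N₀ / (N₀ + N₁ + N₂)) *
        ((Q + ((N₀ : ℝ) : ℂ) • (1 : Matrix (Fin N) (Fin N) ℂ))⁻¹).trace.re := by
  have hs : 0 < N₀ + N₁ + N₂ := by positivity
  rw [hQ.trace_inv_add_smul_one hs, hQ.trace_inv_add_smul_one h0, Complex.ofReal_re,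
    Complex.ofReal_re, ge_iff_le, Finset.mul_sum]
  refine Finset.sum_le_sum fun i _ => ?_
  have hi := hQ.eigenvalues_nonneg i
  rw [← div_eq_mul_inv, div_div, inv_eq_one_div, div_le_div_iff₀ (by positivity) (by positivity)]
  nlinarith [mul_nonneg hi h1, mul_nonneg hi h2]
end

section
/- Let Q be an N×N Hermitian positive semidefinite complex matrix, let h ∈ ℂ^N, and let c ≥ N₀ > 0 be real numbers. Then hᴴ (Q + c·I)⁻¹ h ≥ (N₀/c) · hᴴ (Q + N₀·I)⁻¹ h. -/
open Matrix
open scoped ComplexOrder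

/-- Inversion is antitone on positive definite matrices for the Loewner order. -/
theorem posSemidef_inv_sub_inv {n : Type*} [Fintype n] [DecidableEq n] {A B : Matrix n n ℂ}
    (hA : A.PosDef) (hB : B.PosDef) (hAB : (B - A).PosSemidef) : (A⁻¹ - B⁻¹).PosSemidef := by
  have hAA : A⁻¹ * A = 1 := Matrix.nonsing_inv_mul A ((isUnit_iff_isUnit_det A).1 hA.isUnit)
  have hAA' : A * A⁻¹ = 1 := Matrix.mul_nonsing_inv A ((isUnit_iff_isUnit_det A).1 hA.isUnit)
  have hBB : B⁻¹ * B = 1 := Matrix.nonsing_inv_mul B ((isUnit_iff_isUnit_det B).1 hB.isUnit)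
  have hBinv : B⁻¹ᴴ = B⁻¹ := hB.inv.isHermitian
  have hD : (A⁻¹ - B⁻¹)ᴴ = A⁻¹ - B⁻¹ := hA.inv.isHermitian.sub hB.inv.isHermitian
  have key : A⁻¹ - B⁻¹ = (A⁻¹ - B⁻¹)ᴴ * A * (A⁻¹ - B⁻¹) + B⁻¹ᴴ * (B - A) * B⁻¹ := by
    rw [hD, hBinv]
    simp only [sub_mul, mul_sub, hAA, hBB, one_mul, Matrix.mul_assoc B⁻¹ A A⁻¹, hAA', mul_one]
    abel
  rw [key]
  exact (hA.posSemidef.conjTranspose_mul_mul_same _).add (hAB.conjTranspose_mul_mul_same _)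

/-- For `Q` Hermitian positive semidefinite, `h ∈ ℂ^N` and `c ≥ N₀ > 0`,
`hᴴ (Q + c·I)⁻¹ h ≥ (N₀/c) · hᴴ (Q + N₀·I)⁻¹ h` (both quadratic forms
being real numbers). -/
theorem stmt4 (N : ℕ) (Q : Matrix (Fin N) (Fin N) ℂ) (hQ : Q.PosSemidef)
    (h : Fin N → ℂ) (N₀ c : ℝ) (h0 : 0 < N₀) (hc : N₀ ≤ c) :
    (star h ⬝ᵥ (Q + ((c : ℝ) : ℂ) • (1 : Matrix (Fin N) (Fin N) ℂ))⁻¹ *ᵥ h).re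
      ≥ (N₀ / c) *
        (star h ⬝ᵥ (Q + ((N₀ : ℝ) : ℂ) • (1 : Matrix (Fin N) (Fin N) ℂ))⁻¹ *ᵥ h).re := by
  have hc0 : 0 < c := h0.trans_le hc
  have posDef_shift (t : ℝ) (ht : 0 < t) :
      (Q + (t : ℂ) • (1 : Matrix (Fin N) (Fin N) ℂ)).PosDef :=
    PosDef.posSemidef_add hQ (PosDef.one.smul (Complex.zero_lt_real.2 ht))
  have hN : (N₀ : ℂ) ≠ 0 := Complex.ofReal_ne_zero.2 h0.ne'
  have hA := posDef_shift N₀ h0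
  have hr : (0 : ℂ) < ((c / N₀ : ℝ) : ℂ) := Complex.zero_lt_real.2 (div_pos hc0 h0)
  have hsub : (((c / N₀ : ℝ) : ℂ) • (Q + (N₀ : ℂ) • (1 : Matrix (Fin N) (Fin N) ℂ))
      - (Q + (c : ℂ) • (1 : Matrix (Fin N) (Fin N) ℂ))).PosSemidef := by
    have hcoef : (0 : ℂ) ≤ ((c / N₀ - 1 : ℝ) : ℂ) :=
      Complex.zero_le_real.2 (sub_nonneg.2 ((one_le_div h0).2 hc))
    convert hQ.smul hcoef using 1
    rw [smul_add, smul_smul, Complex.ofReal_sub, Complex.ofReal_div, div_mul_cancel₀ _ hN,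
      sub_smul, Complex.ofReal_one, one_smul]
    abel
  have hinv : (((c / N₀ : ℝ) : ℂ) • (Q + (N₀ : ℂ) • (1 : Matrix (Fin N) (Fin N) ℂ)))⁻¹
      = ((N₀ / c : ℝ) : ℂ) • (Q + (N₀ : ℂ) • (1 : Matrix (Fin N) (Fin N) ℂ))⁻¹ := by
    refine Matrix.inv_eq_left_inv ?_
    rw [smul_mul_smul_comm, Matrix.nonsing_inv_mul _ ((isUnit_iff_isUnit_det _).1 hA.isUnit),
      ← Complex.ofReal_mul, div_mul_div_cancel₀ hc0.ne', div_self h0.ne', Complex.ofReal_one,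
      one_smul]
  have hpos := (posSemidef_inv_sub_inv (posDef_shift c hc0) (hA.smul hr)
    hsub).dotProduct_mulVec_nonneg h
  rw [hinv, sub_mulVec, dotProduct_sub, smul_mulVec, dotProduct_smul, smul_eq_mul] at hpos
  have hre := (Complex.le_def.1 hpos).1
  rw [Complex.zero_re, Complex.sub_re, Complex.re_ofReal_mul] at hre
  exact sub_nonneg.1 hre
end

section
/- With the parameters and definitions of the circular-network lower bound (0 < r₀ < r, α > 2, N₀, P_S, P_T > 0, K > 0; A, B, C, M, D, z, ρ̄ as defined), one has A < 0, B < 0, C > 0, M > 0, and D(d₀) > 0 for every d₀ ∈ [r₀, r]. -/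
/-- Sign facts for the circular-network lower bound: with `0 < r₀ < r`,
`α > 2`, `N₀, P_S, P_T > 0`, `K > 0` and `A, B, C, M, D` as defined,
one has `A < 0`, `B < 0`, `C > 0`, `M > 0`, and `D d₀ > 0` on `[r₀, r]`. -/
theorem stmt5 (r₀ r α N₀ P_S P_T K A B C M : ℝ) (D : ℝ → ℝ)
    (hr₀ : 0 < r₀) (hr : r₀ < r) (hα : 2 < α) (hN₀ : 0 < N₀)
    (hPS : 0 < P_S) (hPT : 0 < P_T) (hK : 0 < K)
    (hA : A = N₀ / (2 * (r ^ (2 - α) - r₀ ^ (2 - α)) + (2 - α) * r₀ ^ (2 - α)))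
    (hB : B = 2 * P_S * K / ((2 - α) * r ^ 2))
    (hC : C = P_S * K ^ 2 / (P_T * r ^ 2))
    (hM : M = 2 * N₀ + 2 * B * r ^ (2 - α) - α * B * r₀ ^ (2 - α))
    (hD : ∀ d₀, D d₀ = N₀ + B * r ^ (2 - α) - B * d₀ ^ (2 - α) + C * d₀ ^ 2) :
    A < 0 ∧ B < 0 ∧ 0 < C ∧ 0 < M ∧ ∀ d₀ ∈ Set.Icc r₀ r, 0 < D d₀ := by
  have hr_pos : 0 < r := hr₀.trans hr
  have hexp : 2 - α < 0 := by linarith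
  have hpow_pos : 0 < r₀ ^ (2 - α) := Real.rpow_pos_of_pos hr₀ _
  have hpow_lt : r ^ (2 - α) < r₀ ^ (2 - α) := Real.rpow_lt_rpow_of_neg hr₀ hr hexp
  have hB_neg : B < 0 := by
    rw [hB]
    exact div_neg_of_pos_of_neg (by positivity) (mul_neg_of_neg_of_pos hexp (by positivity))
  have hC_pos : 0 < C := by
    rw [hC]
    positivity
  refine ⟨?_, hB_neg, hC_pos, ?_, fun d₀ hd₀ => ?_⟩
  · rw [hA]
    refine div_neg_of_pos_of_neg hN₀ ?_
    linarith [mul_neg_of_neg_of_pos hexp hpow_pos]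
  · have hbracket : 2 * r ^ (2 - α) - α * r₀ ^ (2 - α) < 0 := by
      linarith [mul_neg_of_neg_of_pos hexp hpow_pos]
    rw [hM]
    linarith [mul_pos_of_neg_of_neg hB_neg hbracket]
  · have hd₀_pos : 0 < d₀ := hr₀.trans_le hd₀.1
    have hpow_le : r ^ (2 - α) ≤ d₀ ^ (2 - α) :=
      Real.rpow_le_rpow_of_nonpos hd₀_pos hd₀.2 hexp.le
    have hC_sq : 0 < C * d₀ ^ 2 := by positivity
    rw [hD]
    linarith [mul_le_mul_of_nonpos_left hpow_le hB_neg.le]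
end

section
/- With the parameters and definitions of the circular-network lower bound (0 < r₀ < r, α > 2, N₀, P_S, P_T > 0, K > 0; A, B, C, M, z as defined), the function z is strictly decreasing on the interval [r₀, r], and z(r₀) > 0. -/
/-- With the circular-network definitions (`0 < r₀ < r`, `α > 2`,
`N₀, P_S, P_T > 0`, `K > 0`; `A, B, C, M, z` as defined), `z` is strictly
decreasing on `[r₀, r]` and `z r₀ > 0`. -/
theorem stmt6 (r₀ r α N₀ P_S P_T K A B C M : ℝ) (z : ℝ → ℝ)
    (hr₀ : 0 < r₀) (hr : r₀ < r) (hα : 2 < α) (hN₀ : 0 < N₀)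
    (hPS : 0 < P_S) (hPT : 0 < P_T) (hK : 0 < K)
    (hA : A = N₀ / (2 * (r ^ (2 - α) - r₀ ^ (2 - α)) + (2 - α) * r₀ ^ (2 - α)))
    (hB : B = 2 * P_S * K / ((2 - α) * r ^ 2))
    (hC : C = P_S * K ^ 2 / (P_T * r ^ 2))
    (hM : M = 2 * N₀ + 2 * B * r ^ (2 - α) - α * B * r₀ ^ (2 - α))
    (hz : ∀ d₀, z d₀ = (2 - α) * A * M * d₀ ^ (1 - α)
        + 2 * α * A * C * (r₀ ^ (2 - α) * d₀ - d₀ ^ (3 - α))) :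
    StrictAntiOn z (Set.Icc r₀ r) ∧ 0 < z r₀ := by
  have hlt : r ^ (2 - α) < r₀ ^ (2 - α) :=
    Real.rpow_lt_rpow_of_neg hr₀ hr (by linarith)
  have hr_pos : 0 < r := hr₀.trans hr
  have hrpow : 0 < r₀ ^ (2 - α) := Real.rpow_pos_of_pos hr₀ _
  have hden : 2 * r ^ (2 - α) - α * r₀ ^ (2 - α) < 0 := by nlinarith
  have hA_neg : A < 0 := by
    rw [hA]
    exact div_neg_of_pos_of_neg hN₀ (by linarith)
  have hB_neg : B < 0 := by
    rw [hB]
    exact div_neg_of_pos_of_neg (by positivity)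
      (mul_neg_of_neg_of_pos (by linarith) (by positivity))
  have hC_pos : 0 < C := by rw [hC]; positivity
  have hM_pos : 0 < M := by
    rw [hM]
    linarith [mul_pos_of_neg_of_neg hB_neg hden]
  have hcoef : 0 < (2 - α) * A * M :=
    mul_pos (mul_pos_of_neg_of_neg (by linarith) hA_neg) hM_pos
  have hcoef' : 2 * α * A * C < 0 :=
    mul_neg_of_neg_of_pos (mul_neg_of_pos_of_neg (by linarith) hA_neg) hC_pos
  have hfactor : ∀ d : ℝ, 0 < d →
      r₀ ^ (2 - α) * d - d ^ (3 - α) = d * (r₀ ^ (2 - α) - d ^ (2 - α)) := by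
    intro d hd
    rw [show 3 - α = (2 - α) + 1 by ring, Real.rpow_add_one hd.ne']
    ring
  refine ⟨fun x hx y hy hxy => ?_, ?_⟩
  · have hx_pos : 0 < x := hr₀.trans_le hx.1
    have hy_pos : 0 < y := hx_pos.trans hxy
    have hpow : y ^ (1 - α) < x ^ (1 - α) :=
      Real.rpow_lt_rpow_of_neg hx_pos hxy (by linarith)
    have hpow' : y ^ (2 - α) < x ^ (2 - α) :=
      Real.rpow_lt_rpow_of_neg hx_pos hxy (by linarith)
    have hx_le : x ^ (2 - α) ≤ r₀ ^ (2 - α) :=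
      Real.rpow_le_rpow_of_nonpos hr₀ hx.1 (by linarith)
    have hmono : x * (r₀ ^ (2 - α) - x ^ (2 - α)) ≤ y * (r₀ ^ (2 - α) - y ^ (2 - α)) :=
      mul_le_mul hxy.le (by linarith) (by linarith) hy_pos.le
    rw [hz, hz, hfactor x hx_pos, hfactor y hy_pos]
    exact add_lt_add_of_lt_of_le (mul_lt_mul_of_pos_left hpow hcoef)
      (mul_le_mul_of_nonpos_left hmono hcoef'.le)
  · rw [hz, hfactor r₀ hr₀, sub_self, mul_zero, mul_zero, add_zero]
    exact mul_pos hcoef (Real.rpow_pos_of_pos hr₀ _)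
end

section
/- (Existence and uniqueness of the optimal distance threshold.) With the parameters and definitions of the circular-network lower bound (0 < r₀ < r, α > 2, N₀, P_S, P_T > 0, K > 0; A, B, C, M, D, z, ρ̄ as defined), if z(r) < 0, then there exists a unique d_opt ∈ (r₀, r) at which ρ̄ attains its maximum over [r₀, r]; moreover ρ̄ is strictly increasing on [r₀, d_opt] and strictly decreasing on [d_opt, r]. -/
/-- The factor of `z` that carries its sign is strictly increasing to the right of `r₀`. -/
lemma strictMonoOn_sq_mul_rpow_sub_one {r₀ α : ℝ} (hr₀ : 0 < r₀) (hα : 2 < α) :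
    StrictMonoOn (fun d : ℝ => d ^ 2 * (r₀ ^ (2 - α) * d ^ (α - 2) - 1)) (Set.Ici r₀) := by
  intro x hx y hy hxy
  have hx : r₀ ≤ x := hx
  have hx0 : 0 < x := hr₀.trans_le hx
  have hp : 0 < r₀ ^ (2 - α) := Real.rpow_pos_of_pos hr₀ _
  have hone : r₀ ^ (2 - α) * r₀ ^ (α - 2) = 1 := by
    rw [← Real.rpow_add hr₀]; simp
  have hle : r₀ ^ (α - 2) ≤ x ^ (α - 2) := Real.rpow_le_rpow hr₀.le hx (by linarith)
  have hlt : x ^ (α - 2) < y ^ (α - 2) := Real.rpow_lt_rpow hx0.le hxy (by linarith)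
  have hnonneg : 0 ≤ r₀ ^ (2 - α) * x ^ (α - 2) - 1 := by
    linarith [mul_le_mul_of_nonneg_left hle hp.le]
  have hstep : r₀ ^ (2 - α) * x ^ (α - 2) - 1 < r₀ ^ (2 - α) * y ^ (α - 2) - 1 := by
    linarith [mul_lt_mul_of_pos_left hlt hp]
  have hsq : x ^ 2 ≤ y ^ 2 := pow_le_pow_left₀ hx0.le hxy.le 2
  exact mul_lt_mul' hsq hstep hnonneg (by have := hx0.trans hxy; positivity)

/-- A function increasing up to `c` and decreasing afterwards has `c` as its only maximizer. -/
lemma StrictMonoOn.isMaxOn_and_unique_of_strictAntiOn {f : ℝ → ℝ} {a b c : ℝ}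
    (hc : c ∈ Set.Icc a b) (hmono : StrictMonoOn f (Set.Icc a c))
    (hanti : StrictAntiOn f (Set.Icc c b)) :
    IsMaxOn f (Set.Icc a b) c ∧
      ∀ d ∈ Set.Icc a b, IsMaxOn f (Set.Icc a b) d → d = c := by
  have key : ∀ d ∈ Set.Icc a b, d ≠ c → f d < f c := by
    intro d hd hne
    rcases lt_or_gt_of_ne hne with h | h
    · exact hmono ⟨hd.1, h.le⟩ ⟨hc.1, le_rfl⟩ h
    · exact hanti ⟨le_rfl, hc.2⟩ ⟨h.le, hd.2⟩ h
  refine ⟨fun d hd => ?_, fun d hd hmax => ?_⟩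
  · rcases eq_or_ne d c with rfl | hne
    · exact le_refl (f d)
    · exact (key d hd hne).le
  · by_contra hne
    exact absurd (hmax hc) (not_le.2 (key d hd hne))

/-- Quotient rule for the ratio defining the fidelity bound. -/
lemma hasDerivAt_fidelity {α A B C N s q d : ℝ} (hd : 0 < d)
    (hne : N + B * s - B * d ^ (2 - α) + C * d ^ 2 ≠ 0) :
    HasDerivAt
      (fun x : ℝ => A * (2 * x ^ (2 - α) - α * q) / (N + B * s - B * x ^ (2 - α) + C * x ^ 2))
      (((2 - α) * A * (2 * N + 2 * B * s - α * B * q) * d ^ (1 - α)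
          + 2 * α * A * C * (q * d - d ^ (3 - α)))
        / (N + B * s - B * d ^ (2 - α) + C * d ^ 2) ^ 2) d := by
  have hpow : HasDerivAt (fun x : ℝ => x ^ (2 - α)) ((2 - α) * d ^ (1 - α)) d := by
    have h := Real.hasDerivAt_rpow_const (x := d) (p := 2 - α) (Or.inl hd.ne')
    rwa [show 2 - α - 1 = 1 - α by ring] at h
  have hnum := ((hpow.const_mul 2).sub_const (α * q)).const_mul A
  have hden := ((hpow.const_mul B).const_sub (N + B * s)).add
    ((hasDerivAt_pow 2 d).const_mul C)
  refine (hnum.div hden hne).congr_deriv ?_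
  have h2 : d ^ (2 - α) = d ^ (1 - α) * d := by
    rw [← Real.rpow_add_one hd.ne']; congr 1; ring
  have h3 : d ^ (3 - α) = d ^ (1 - α) * d ^ 2 := by
    rw [← Real.rpow_add_natCast hd.ne']; congr 1; push_cast; ring
  simp only [Pi.add_apply]
  rw [h2, h3]
  congr 1
  push_cast
  ring

/-- Existence and uniqueness of the optimal distance threshold: with the
circular-network definitions and `z r < 0`, there is a unique
`d_opt ∈ (r₀, r)` at which `ρ̄` attains its maximum over `[r₀, r]`;
moreover `ρ̄` is strictly increasing on `[r₀, d_opt]` and strictly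
decreasing on `[d_opt, r]`. -/
theorem stmt9 (r₀ r α N₀ P_S P_T K A B C M : ℝ) (D z ρ : ℝ → ℝ)
    (hr₀ : 0 < r₀) (hr : r₀ < r) (hα : 2 < α) (hN₀ : 0 < N₀)
    (hPS : 0 < P_S) (hPT : 0 < P_T) (hK : 0 < K)
    (hA : A = N₀ / (2 * (r ^ (2 - α) - r₀ ^ (2 - α)) + (2 - α) * r₀ ^ (2 - α)))
    (hB : B = 2 * P_S * K / ((2 - α) * r ^ 2))
    (hC : C = P_S * K ^ 2 / (P_T * r ^ 2))
    (hM : M = 2 * N₀ + 2 * B * r ^ (2 - α) - α * B * r₀ ^ (2 - α))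
    (hD : ∀ d₀, D d₀ = N₀ + B * r ^ (2 - α) - B * d₀ ^ (2 - α) + C * d₀ ^ 2)
    (hz : ∀ d₀, z d₀ = (2 - α) * A * M * d₀ ^ (1 - α)
        + 2 * α * A * C * (r₀ ^ (2 - α) * d₀ - d₀ ^ (3 - α)))
    (hρ : ∀ d₀, ρ d₀ = A * (2 * d₀ ^ (2 - α) - α * r₀ ^ (2 - α)) / D d₀)
    (hzr : z r < 0) :
    ∃ dopt ∈ Set.Ioo r₀ r,
      IsMaxOn ρ (Set.Icc r₀ r) dopt
      ∧ StrictMonoOn ρ (Set.Icc r₀ dopt)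
      ∧ StrictAntiOn ρ (Set.Icc dopt r)
      ∧ ∀ d ∈ Set.Ioo r₀ r, IsMaxOn ρ (Set.Icc r₀ r) d → d = dopt := by
  have hr0 : 0 < r := hr₀.trans hr
  have hp : 0 < r₀ ^ (2 - α) := Real.rpow_pos_of_pos hr₀ _
  have hpr : r ^ (2 - α) < r₀ ^ (2 - α) := Real.rpow_lt_rpow_of_neg hr₀ hr (by linarith)
  have hA0 : A < 0 := by
    rw [hA]
    refine div_neg_of_pos_of_neg hN₀ ?_
    linarith [mul_neg_of_neg_of_pos (show 2 - α < 0 by linarith) hp]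
  have hB0 : B < 0 := by
    rw [hB]
    exact div_neg_of_pos_of_neg (by positivity)
      (mul_neg_of_neg_of_pos (by linarith) (by positivity))
  have hC0 : 0 < C := by rw [hC]; positivity
  have hM0 : 0 < M := by
    have hneg : 2 * r ^ (2 - α) - α * r₀ ^ (2 - α) < 0 := by
      linarith [mul_lt_mul_of_pos_right hα hp]
    linarith [mul_pos_of_neg_of_neg hB0 hneg]
  have hDpos : ∀ d, 0 < d → d ≤ r → 0 < D d := by
    intro d hd hdr
    have hle : r ^ (2 - α) ≤ d ^ (2 - α) :=
      Real.rpow_le_rpow_of_nonpos hd hdr (by linarith)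
    have hCd : 0 < C * d ^ 2 := by positivity
    rw [hD]
    linarith [mul_le_mul_of_nonpos_left hle hB0.le]
  have hderiv : ∀ d, 0 < d → d ≤ r → HasDerivAt ρ (z d / D d ^ 2) d := by
    intro d hd hdr
    have hne := (hDpos d hd hdr).ne'
    rw [hD] at hne
    have h := hasDerivAt_fidelity (A := A) (q := r₀ ^ (2 - α)) hd hne
    rw [← hM, ← hD, ← hz] at h
    exact h.congr_of_eventuallyEq (.of_forall fun x => by simp only [hρ, hD])
  set g : ℝ → ℝ := fun d =>
    (2 - α) * M + 2 * α * C * (d ^ 2 * (r₀ ^ (2 - α) * d ^ (α - 2) - 1)) with hg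
  have hzg : ∀ d, 0 < d → z d = A * d ^ (1 - α) * g d := by
    intro d hd
    have h1 : d ^ (1 - α) * d ^ (α - 2) * d ^ 2 = d := by
      rw [← Real.rpow_add hd, ← Real.rpow_add_natCast hd.ne']
      convert Real.rpow_one d using 2
      push_cast; ring
    have h3 : d ^ (3 - α) = d ^ (1 - α) * d ^ 2 := by
      rw [← Real.rpow_add_natCast hd.ne']; congr 1; push_cast; ring
    rw [hz, h3, hg]
    linear_combination (-2 * α * A * C * r₀ ^ (2 - α)) * h1
  have hfac : ∀ d, 0 < d → A * d ^ (1 - α) < 0 := fun d hd =>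
    mul_neg_of_neg_of_pos hA0 (Real.rpow_pos_of_pos hd _)
  have hgmono : StrictMonoOn g (Set.Ici r₀) := by
    intro x hx y hy hxy
    have hcoef : 0 < 2 * α * C := by positivity
    have h := mul_lt_mul_of_pos_left
      (strictMonoOn_sq_mul_rpow_sub_one hr₀ hα hx hy hxy) hcoef
    simp only [hg]
    linarith
  have hgr₀ : g r₀ < 0 := by
    have hone : r₀ ^ (2 - α) * r₀ ^ (α - 2) = 1 := by
      rw [← Real.rpow_add hr₀]; simp
    simp only [hg, hone, sub_self, mul_zero, add_zero]
    exact mul_neg_of_neg_of_pos (by linarith) hM0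
  have hgr : 0 < g r := by
    rw [hzg r hr0] at hzr
    exact pos_of_mul_neg_right hzr (hfac r hr0).le
  have hgcont : ContinuousOn g (Set.Icc r₀ r) := by
    have hrpow : ContinuousOn (fun d : ℝ => d ^ (α - 2)) (Set.Icc r₀ r) :=
      continuousOn_id.rpow_const fun x _ => Or.inr (by linarith)
    simp only [hg]
    fun_prop
  obtain ⟨c, hc, hgc⟩ := intermediate_value_Ioo hr.le hgcont ⟨hgr₀, hgr⟩
  have hc0 : 0 < c := hr₀.trans hc.1
  have hmono : StrictMonoOn ρ (Set.Icc r₀ c) := by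
    refine strictMonoOn_of_deriv_pos (convex_Icc _ _) (fun d hd => ?_) (fun d hd => ?_)
    · exact (hderiv d (hr₀.trans_le hd.1) (hd.2.trans hc.2.le)).continuousAt.continuousWithinAt
    · rw [interior_Icc] at hd
      have hd0 : 0 < d := hr₀.trans hd.1
      have hdr : d ≤ r := (hd.2.trans hc.2).le
      have hgd : g d < 0 := hgc ▸ hgmono hd.1.le hc.1.le hd.2
      rw [(hderiv d hd0 hdr).deriv, hzg d hd0]
      exact div_pos (mul_pos_of_neg_of_neg (hfac d hd0) hgd) (pow_pos (hDpos d hd0 hdr) 2)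
  have hanti : StrictAntiOn ρ (Set.Icc c r) := by
    refine strictAntiOn_of_deriv_neg (convex_Icc _ _) (fun d hd => ?_) (fun d hd => ?_)
    · exact (hderiv d (hc0.trans_le hd.1) hd.2).continuousAt.continuousWithinAt
    · rw [interior_Icc] at hd
      have hd0 : 0 < d := hc0.trans hd.1
      have hgd : 0 < g d := hgc ▸ hgmono hc.1.le (hc.1.trans hd.1).le hd.1
      rw [(hderiv d hd0 hd.2.le).deriv, hzg d hd0]
      exact div_neg_of_neg_of_pos (mul_neg_of_neg_of_pos (hfac d hd0) hgd)
        (pow_pos (hDpos d hd0 hd.2.le) 2)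
  obtain ⟨hmax, huniq⟩ :=
    hmono.isMaxOn_and_unique_of_strictAntiOn (Set.Ioo_subset_Icc_self hc) hanti
  exact ⟨c, hc, hmax, hmono, hanti, fun d hd => huniq d (Set.Ioo_subset_Icc_self hd)⟩
end

section
/- (Concavity of the Dinkelbach subproblem objective.) Let 0 < r₀ < r, α > 1, N₀ > 0, P_Σ > 0, c ≥ 0, M₀ > 0, and q ≥ 0 be real numbers. Define G : (r₀, r) → ℝ by G(d₀) = N₀·∫_{r₀}^{d₀} x^{1−α}·(2/r²) dx − q·M₀·( N₀ + P_Σ·∫_{d₀}^{r} x^{1−α}·(2/r²) dx + c·P_Σ·∫_{r₀}^{d₀} (2x/r²) dx ). Then G is strictly concave on (r₀, r). -/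
/-- The fundamental theorem of calculus for `x ^ p * k` on the positive half-line. -/
theorem hasDerivAt_integral_rpow_mul {a d : ℝ} (p k : ℝ) (ha : 0 < a) (hd : 0 < d) :
    HasDerivAt (fun u => ∫ x in a..u, x ^ p * k) (d ^ p * k) d := by
  have hcont : ContinuousOn (fun x : ℝ => x ^ p * k) (Set.Ioi 0) := fun x hx =>
    ((Real.continuousAt_rpow_const x p (Or.inl (ne_of_gt hx))).mul_const k).continuousWithinAt
  refine intervalIntegral.integral_hasDerivAt_right
    (hcont.mono fun x hx => ?_).intervalIntegrable
    (hcont.stronglyMeasurableAtFilter isOpen_Ioi d hd)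
    (hcont.continuousAt (Ioi_mem_nhds hd))
  exact lt_of_lt_of_le (lt_min ha hd) hx.1

/-- Concavity of the Dinkelbach subproblem objective for the circular
network: `G(d₀) = N₀·∫_{r₀}^{d₀} x^{1−α}(2/r²) dx
− q·M₀·(N₀ + P_Σ·∫_{d₀}^{r} x^{1−α}(2/r²) dx + c·P_Σ·∫_{r₀}^{d₀} (2x/r²) dx)`
is strictly concave on `(r₀, r)`. -/
theorem stmt11 (r₀ r α N₀ Psum c M₀ q : ℝ) (G : ℝ → ℝ)
    (hr₀ : 0 < r₀) (hr : r₀ < r) (hα : 1 < α) (hN₀ : 0 < N₀)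
    (hP : 0 < Psum) (hc : 0 ≤ c) (hM₀ : 0 < M₀) (hq : 0 ≤ q)
    (hG : ∀ d₀, G d₀ =
      N₀ * (∫ x in r₀..d₀, x ^ (1 - α) * (2 / r ^ 2))
        - q * M₀ * (N₀ + Psum * (∫ x in d₀..r, x ^ (1 - α) * (2 / r ^ 2))
          + c * Psum * (∫ x in r₀..d₀, 2 * x / r ^ 2))) :
    StrictConcaveOn ℝ (Set.Ioo r₀ r) G := by
  have hderiv : ∀ d ∈ Set.Ioo r₀ r, HasDerivAt G
      ((N₀ + q * M₀ * Psum) * (d ^ (1 - α) * (2 / r ^ 2))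
        - q * M₀ * (c * Psum) * (2 * d / r ^ 2)) d := by
    intro d hd
    have hd0 : 0 < d := hr₀.trans hd.1
    have hleft := hasDerivAt_integral_rpow_mul (1 - α) (2 / r ^ 2) hr₀ hd0
    have hright := (hasDerivAt_integral_rpow_mul (1 - α) (2 / r ^ 2) (hr₀.trans hr) hd0).neg
    have hlin : HasDerivAt (fun u => ∫ x in r₀..u, 2 * x / r ^ 2) (2 * d / r ^ 2) d :=
      (by fun_prop : Continuous fun x : ℝ => 2 * x / r ^ 2).integral_hasStrictDerivAt r₀ d
        |>.hasDerivAt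
    have h := (hleft.const_mul N₀).sub
      ((((hright.const_mul Psum).const_add N₀).add (hlin.const_mul (c * Psum))).const_mul (q * M₀))
    refine (h.congr_of_eventuallyEq (.of_forall fun u => ?_)).congr_deriv (by ring)
    simp only [hG, intervalIntegral.integral_symm r u, Pi.sub_apply, Pi.add_apply, Pi.neg_apply]
  refine StrictAntiOn.strictConcaveOn_of_deriv (convex_Ioo r₀ r)
    (fun d hd => (hderiv d hd).continuousAt.continuousWithinAt) ?_
  rw [interior_Ioo]
  intro a ha b hb hab
  rw [(hderiv a ha).deriv, (hderiv b hb).deriv]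
  have hr0 : 0 < r := hr₀.trans hr
  have hpow : b ^ (1 - α) < a ^ (1 - α) :=
    Real.rpow_lt_rpow_of_neg (hr₀.trans ha.1) hab (by linarith)
  have hlt : (N₀ + q * M₀ * Psum) * (b ^ (1 - α) * (2 / r ^ 2))
      < (N₀ + q * M₀ * Psum) * (a ^ (1 - α) * (2 / r ^ 2)) := by gcongr
  have hle : q * M₀ * (c * Psum) * (2 * a / r ^ 2)
      ≤ q * M₀ * (c * Psum) * (2 * b / r ^ 2) := by gcongr
  linarith
end

section
/- (Unique optimal distance threshold with non-orthogonal training.) Let 0 < r₀ < r, α > 2, N₀ > 0, P_S > 0, P_T > 0, K > 0, 0 < τ < K and μ > 0 be real numbers. Define A = N₀/(2(r^{2−α} − r₀^{2−α}) + (2−α)·r₀^{2−α}), B = 2·P_S·K/((2−α)·r²), C′ = (P_S·K²/P_T + 2·P_S·K·(1 − τ/K)·μ)/r², M = 2·N₀ + 2·B·r^{2−α} − α·B·r₀^{2−α}, D′(d₀) = N₀ + B·r^{2−α} − B·d₀^{2−α} + C′·d₀², z′(d₀) = (2−α)·A·M·d₀^{1−α} + 2·α·A·C′·(r₀^{2−α}·d₀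 − d₀^{3−α}), and ρ̄′(d₀) = A·(2·d₀^{2−α} − α·r₀^{2−α})/D′(d₀). Then C′ > 0, z′ is strictly decreasing on [r₀, r] with z′(r₀) > 0, and if z′(r) < 0 there exists a unique d_opt ∈ (r₀, r) at which ρ̄′ attains its maximum over [r₀, r]. -/
/-- A function whose derivative on `[a, b]` is a positive multiple of a continuous strictly decreasing
function changing sign has a unique maximizer over `[a, b]`, and it lies in the interior. -/
theorem exists_unique_isMaxOn_of_hasDerivAt_mul {f g w : ℝ → ℝ} {a b : ℝ} (hab : a < b)
    (hf : ∀ x ∈ Set.Icc a b, HasDerivAt f (g x * w x) x) (hw : ∀ x ∈ Set.Icc a b, 0 < w x)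
    (hg : StrictAntiOn g (Set.Icc a b)) (hgc : ContinuousOn g (Set.Icc a b))
    (hga : 0 < g a) (hgb : g b < 0) :
    ∃ c ∈ Set.Ioo a b, IsMaxOn f (Set.Icc a b) c ∧
      ∀ d ∈ Set.Ioo a b, IsMaxOn f (Set.Icc a b) d → d = c := by
  obtain ⟨c, hc, hgc0⟩ := intermediate_value_Ioo' hab.le hgc ⟨hgb, hga⟩
  have hcI : c ∈ Set.Icc a b := Set.Ioo_subset_Icc_self hc
  have hfc : ContinuousOn f (Set.Icc a b) := fun x hx => (hf x hx).continuousAt.continuousWithinAt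
  have hmono : StrictMonoOn f (Set.Icc a c) := by
    refine strictMonoOn_of_deriv_pos (convex_Icc a c)
      (hfc.mono (Set.Icc_subset_Icc_right hc.2.le)) fun x hx => ?_
    rw [interior_Icc] at hx
    have hxI : x ∈ Set.Icc a b := ⟨hx.1.le, (hx.2.trans hc.2).le⟩
    rw [(hf x hxI).deriv]
    exact mul_pos (hgc0 ▸ hg hxI hcI hx.2) (hw x hxI)
  have hanti : StrictAntiOn f (Set.Icc c b) := by
    refine strictAntiOn_of_deriv_neg (convex_Icc c b)
      (hfc.mono (Set.Icc_subset_Icc_left hc.1.le)) fun x hx => ?_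
    rw [interior_Icc] at hx
    have hxI : x ∈ Set.Icc a b := ⟨(hc.1.trans hx.1).le, hx.2.le⟩
    rw [(hf x hxI).deriv]
    exact mul_neg_of_neg_of_pos (hgc0 ▸ hg hcI hxI hx.1) (hw x hxI)
  have hlt : ∀ x ∈ Set.Icc a b, x ≠ c → f x < f c := by
    intro x hx hxc
    rcases lt_or_gt_of_ne hxc with h | h
    · exact hmono ⟨hx.1, h.le⟩ ⟨hc.1.le, le_rfl⟩ h
    · exact hanti ⟨le_rfl, hc.2.le⟩ ⟨h.le, hx.2⟩ h
  refine ⟨c, hc, fun x hx => ?_, fun d hd hmax => ?_⟩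
  · rcases eq_or_ne x c with rfl | h
    · exact le_refl (f x)
    · exact (hlt x hx h).le
  · by_contra h
    exact (hlt d (Set.Ioo_subset_Icc_self hd) h).not_ge (hmax hcI)

/-- The factor of the pilot-contamination term is strictly increasing for `2 < α`. -/
theorem strictMonoOn_rpow_mul_sub_rpow {a α : ℝ} (ha : 0 < a) (hα : 2 < α) :
    StrictMonoOn (fun x : ℝ => a ^ (2 - α) * x - x ^ (3 - α)) (Set.Ici a) := by
  have key : ∀ x : ℝ, 0 < x → a ^ (2 - α) * x - x ^ (3 - α) = x * (a ^ (2 - α) - x ^ (2 - α)) := by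
    intro x hx
    rw [show (3 - α) = (2 - α) + 1 by ring, Real.rpow_add_one hx.ne']
    ring
  intro x hx y hy hxy
  have hx0 : 0 < x := ha.trans_le hx
  have hy0 : 0 < y := hx0.trans hxy
  have hyx : y ^ (2 - α) < x ^ (2 - α) := Real.rpow_lt_rpow_of_neg hx0 hxy (by linarith)
  have hxa : x ^ (2 - α) ≤ a ^ (2 - α) := Real.rpow_le_rpow_of_nonpos ha hx (by linarith)
  simp only [key x hx0, key y hy0]
  nlinarith [mul_nonneg (sub_pos.2 hxy).le (sub_nonneg.2 hxa), mul_pos hy0 (sub_pos.2 hyx)]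

/-- Unique optimal distance threshold with non-orthogonal training: with
the pilot-contaminated constant `C′`, one has `C′ > 0`, `z′` is strictly
decreasing on `[r₀, r]` with `z′ r₀ > 0`, and if `z′ r < 0` there is a
unique `d_opt ∈ (r₀, r)` at which `ρ̄′` attains its maximum over `[r₀, r]`. -/
theorem stmt14 (r₀ r α N₀ P_S P_T K τ μ A B C' M : ℝ) (D' z' ρ' : ℝ → ℝ)
    (hr₀ : 0 < r₀) (hr : r₀ < r) (hα : 2 < α) (hN₀ : 0 < N₀)
    (hPS : 0 < P_S) (hPT : 0 < P_T) (hK : 0 < K)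
    (hτ0 : 0 < τ) (hτK : τ < K) (hμ : 0 < μ)
    (hA : A = N₀ / (2 * (r ^ (2 - α) - r₀ ^ (2 - α)) + (2 - α) * r₀ ^ (2 - α)))
    (hB : B = 2 * P_S * K / ((2 - α) * r ^ 2))
    (hC' : C' = (P_S * K ^ 2 / P_T + 2 * P_S * K * (1 - τ / K) * μ) / r ^ 2)
    (hM : M = 2 * N₀ + 2 * B * r ^ (2 - α) - α * B * r₀ ^ (2 - α))
    (hD' : ∀ d₀, D' d₀ = N₀ + B * r ^ (2 - α) - B * d₀ ^ (2 - α) + C' * d₀ ^ 2)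
    (hz' : ∀ d₀, z' d₀ = (2 - α) * A * M * d₀ ^ (1 - α)
        + 2 * α * A * C' * (r₀ ^ (2 - α) * d₀ - d₀ ^ (3 - α)))
    (hρ' : ∀ d₀, ρ' d₀ = A * (2 * d₀ ^ (2 - α) - α * r₀ ^ (2 - α)) / D' d₀) :
    0 < C'
    ∧ StrictAntiOn z' (Set.Icc r₀ r)
    ∧ 0 < z' r₀
    ∧ (z' r < 0 → ∃ dopt ∈ Set.Ioo r₀ r,
        IsMaxOn ρ' (Set.Icc r₀ r) dopt
        ∧ ∀ d ∈ Set.Ioo r₀ r, IsMaxOn ρ' (Set.Icc r₀ r) d → d = dopt) := by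
  have hr0 : 0 < r := hr₀.trans hr
  have hs : 0 < r₀ ^ (2 - α) := Real.rpow_pos_of_pos hr₀ _
  have hRs : r ^ (2 - α) < r₀ ^ (2 - α) := Real.rpow_lt_rpow_of_neg hr₀ hr (by linarith)
  have hAneg : A < 0 := by
    rw [hA]
    refine div_neg_of_pos_of_neg hN₀ ?_
    nlinarith [mul_pos (sub_pos.2 hα) hs]
  have hBneg : B < 0 := by
    rw [hB]
    exact div_neg_of_pos_of_neg (by positivity)
      (mul_neg_of_neg_of_pos (by linarith) (by positivity))
  have hCpos : 0 < C' := by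
    have : 0 < 1 - τ / K := sub_pos.2 ((div_lt_one hK).2 hτK)
    rw [hC']
    positivity
  have hMpos : 0 < M := by
    rw [hM]
    have : 2 * r ^ (2 - α) - α * r₀ ^ (2 - α) < 0 := by
      nlinarith [mul_pos (sub_pos.2 hα) hs]
    nlinarith [mul_pos_of_neg_of_neg hBneg this]
  have hcoef : 0 < (2 - α) * A * M :=
    mul_pos (mul_pos_of_neg_of_neg (by linarith) hAneg) hMpos
  have hcoef' : 2 * α * A * C' < 0 :=
    mul_neg_of_neg_of_pos (mul_neg_of_pos_of_neg (by linarith) hAneg) hCpos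
  have hanti : StrictAntiOn z' (Set.Icc r₀ r) := by
    intro x hx y hy hxy
    rw [hz', hz']
    have hpow : y ^ (1 - α) < x ^ (1 - α) :=
      Real.rpow_lt_rpow_of_neg (hr₀.trans_le hx.1) hxy (by linarith)
    exact add_lt_add (mul_lt_mul_of_pos_left hpow hcoef)
      (mul_lt_mul_of_neg_left (strictMonoOn_rpow_mul_sub_rpow hr₀ hα hx.1 hy.1 hxy) hcoef')
  have hzr₀ : 0 < z' r₀ := by
    rw [hz', show (3 - α) = (2 - α) + 1 by ring, Real.rpow_add_one hr₀.ne', sub_self, mul_zero,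
      add_zero]
    exact mul_pos hcoef (Real.rpow_pos_of_pos hr₀ _)
  refine ⟨hCpos, hanti, hzr₀, fun hzr => ?_⟩
  have hDpos : ∀ x ∈ Set.Icc r₀ r, 0 < D' x := by
    intro x hx
    have hx0 : 0 < x := hr₀.trans_le hx.1
    have hrx : r ^ (2 - α) ≤ x ^ (2 - α) := Real.rpow_le_rpow_of_nonpos hx0 hx.2 (by linarith)
    rw [hD']
    nlinarith [mul_nonneg (neg_pos.2 hBneg).le (sub_nonneg.2 hrx), mul_pos hCpos (pow_pos hx0 2)]
  have hzc : ContinuousOn z' (Set.Icc r₀ r) := by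
    have hpow : ∀ p : ℝ, ContinuousOn (fun x : ℝ => x ^ p) (Set.Icc r₀ r) := fun p =>
      continuousOn_id.rpow_const fun x hx => Or.inl (hr₀.trans_le hx.1).ne'
    rw [funext hz']
    exact (continuousOn_const.mul (hpow _)).add
      (continuousOn_const.mul ((continuousOn_const.mul continuousOn_id).sub (hpow _)))
  refine exists_unique_isMaxOn_of_hasDerivAt_mul (w := fun x => (D' x ^ 2)⁻¹) hr (fun x hx => ?_)
    (fun x hx => inv_pos.2 (pow_pos (hDpos x hx) 2)) hanti hzc hzr₀ hzr
  have hx0 : 0 < x := hr₀.trans_le hx.1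
  have hpow : HasDerivAt (fun y : ℝ => y ^ (2 - α)) ((2 - α) * x ^ (1 - α)) x := by
    convert Real.hasDerivAt_rpow_const (p := 2 - α) (Or.inl hx0.ne') using 3
    ring
  have hnum : HasDerivAt (fun y : ℝ => A * (2 * y ^ (2 - α) - α * r₀ ^ (2 - α)))
      (A * (2 * ((2 - α) * x ^ (1 - α)))) x :=
    ((hpow.const_mul 2).sub_const _).const_mul A
  have hden : HasDerivAt D' (-(B * ((2 - α) * x ^ (1 - α))) + C' * (2 * x)) x := by
    rw [funext hD']
    simpa using ((hpow.const_mul B).const_sub (N₀ + B * r ^ (2 - α))).fun_add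
      ((hasDerivAt_pow 2 x).const_mul C')
  rw [funext hρ']
  refine (hnum.fun_div hden (hDpos x hx).ne').congr_deriv ?_
  rw [← div_eq_mul_inv]
  congr 1
  have hx2 : x ^ (2 - α) = x ^ (1 - α) * x := by
    rw [← Real.rpow_add_one hx0.ne']
    ring_nf
  have hx3 : x ^ (3 - α) = x ^ (1 - α) * x * x := by
    rw [← hx2, ← Real.rpow_add_one hx0.ne']
    ring_nf
  rw [hz', hD', hM, hx3, hx2]
  ring
end
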